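/- Let φ: X → B_d(1) ⊆ ℝ^d and let G = {x ↦ ⟨φ(x), θ⟩ : ‖θ‖₂ ≤ R'}. Then for any family Π of probability distributions on X and any ε > 0, dim_DE(G, Π, ε) ≤ O(d · log(1 + R'/ε)). -/

import Mathlib

open MeasureTheory
open scoped RealInnerProductSpace

/-- Expectation of `g` under the measure `μ`. -/
noncomputable def mExp {X : Type*} [MeasurableSpace X] (μ : Measure X) (g : X → ℝ) : ℝ :=
  ∫ x, g x ∂μ

/-- Distributional Eluder dimension `dim_DE(G, Π, ε)`. -/
noncomputable def dimDE {X : Type*} [MeasurableSpace X]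
    (G : Set (X → ℝ)) (Pi : Set (Measure X)) (ε : ℝ) : ℕ :=
  sSup {n | ∃ ρ : Fin n → Measure X, (∀ i, ρ i ∈ Pi) ∧ ∃ ε' ≥ ε, ∀ i : Fin n,
    ∃ g ∈ G,
      Real.sqrt (∑ j : Fin n, if (j : ℕ) < (i : ℕ) then (mExp (ρ j) g) ^ 2 else 0) ≤ ε' ∧
      ε' < |mExp (ρ i) g|}

noncomputable def vv {d : ℕ} (x : ℕ → Fin d → ℝ) (l : ℝ) : ℕ → Matrix (Fin d) (Fin d) ℝ
  | 0 => l • 1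
  | t + 1 => vv x l t + Matrix.vecMulVec (x t) (x t)

open Matrix in
lemma vv_posDef {d : ℕ} (x : ℕ → Fin d → ℝ) {l : ℝ} (hl : 0 < l) (t : ℕ) :
    (vv x l t).PosDef := by
  induction t with
  | zero => exact Matrix.PosDef.one.smul hl
  | succ t ih =>
    refine ih.add_posSemidef ?_
    simpa using Matrix.posSemidef_vecMulVec_self_star (x t)

open Matrix in
lemma vv_quad {d : ℕ} (x : ℕ → Fin d → ℝ) (l : ℝ) (t : ℕ) (v : Fin d → ℝ) :
    v ⬝ᵥ (vv x l t *ᵥ v) = l * (v ⬝ᵥ v) + ∑ j ∈ Finset.range t, (x j ⬝ᵥ v) ^ 2 := by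
  induction t with
  | zero => simp [vv, Matrix.smul_mulVec]
  | succ t ih =>
    rw [vv, Matrix.add_mulVec, dotProduct_add, ih, Finset.sum_range_succ, vecMulVec_mulVec]
    simp [dotProduct_comm v (x t)]
    ring

open Matrix in
lemma vv_trace {d : ℕ} (x : ℕ → Fin d → ℝ) (l : ℝ) (hx : ∀ i, x i ⬝ᵥ x i ≤ 1) (t : ℕ) :
    (vv x l t).trace ≤ l * d + t := by
  induction t with
  | zero => simp [vv]
  | succ t ih =>
    rw [vv, trace_add, trace_vecMulVec]
    push_cast
    linarith [hx t]

open Matrix in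
lemma vv_step {d : ℕ} (x : ℕ → Fin d → ℝ) {l : ℝ} (hl : 0 < l) (t : ℕ) (v : Fin d → ℝ)
    (e : ℝ) (h1 : v ⬝ᵥ (vv x l t *ᵥ v) ≤ 2 * e ^ 2) (h2 : e ^ 2 < (x t ⬝ᵥ v) ^ 2) :
    (3 / 2) * (vv x l t).det ≤ (vv x l (t + 1)).det := by
  have hp := vv_posDef x hl t
  have hd := hp.det_pos
  have hu : IsUnit (vv x l t).det := hd.ne'.isUnit
  have hdet : (vv x l (t + 1)).det
      = (vv x l t).det * (1 + x t ⬝ᵥ ((vv x l t)⁻¹ *ᵥ x t)) := by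
    have := det_add_replicateCol_mul_replicateRow (ι := Unit) hu (x t) (x t)
    rw [vv, vecMulVec_eq Unit, this]
    congr 1
    rw [det_unique]
    rw [Matrix.add_apply, Matrix.one_apply_eq]
    congr 1
    rw [Matrix.mul_assoc]
    rfl
  set w := (vv x l t)⁻¹ *ᵥ x t with hw
  have hVw : vv x l t *ᵥ w = x t := by
    rw [hw, mulVec_mulVec, mul_nonsing_inv _ hu, one_mulVec]
  have hsym : w ⬝ᵥ (vv x l t *ᵥ v) = x t ⬝ᵥ v := by
    have hT : (vv x l t)ᵀ = vv x l t := by simpa using hp.isHermitian.eq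
    rw [dotProduct_mulVec, ← mulVec_transpose, hT, hVw]
  set b := x t ⬝ᵥ v with hb
  have hnn := hp.posSemidef.dotProduct_mulVec_nonneg (v - (2 * b) • w)
  have hex : star (v - (2 * b) • w) ⬝ᵥ (vv x l t *ᵥ (v - (2 * b) • w))
      = v ⬝ᵥ (vv x l t *ᵥ v) - 4 * b ^ 2 + 4 * b ^ 2 * (x t ⬝ᵥ w) := by
    simp only [star_trivial, mulVec_sub, mulVec_smul, hVw, sub_dotProduct, dotProduct_sub,
      smul_dotProduct, dotProduct_smul, hsym, smul_eq_mul, dotProduct_comm v (x t),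
      dotProduct_comm w (x t), ← hb]
    ring
  rw [hex] at hnn
  have hq : 1 / 2 ≤ x t ⬝ᵥ w := by
    by_contra hc
    push Not at hc
    nlinarith [sq_nonneg e]
  rw [hdet]
  nlinarith

open Matrix in
lemma log_det_le {d : ℕ} {A : Matrix (Fin d) (Fin d) ℝ} (hA : A.PosDef) {s : ℝ} (hs : 0 < s)
    (htr : A.trace ≤ s * d) : Real.log A.det ≤ d * Real.log s := by
  have h1 : A.det = ∏ i, hA.isHermitian.eigenvalues i := by
    simpa using hA.isHermitian.det_eq_prod_eigenvalues
  have h2 : A.trace = ∑ i, hA.isHermitian.eigenvalues i := by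
    simpa using hA.isHermitian.trace_eq_sum_eigenvalues
  have hpos := fun i => hA.eigenvalues_pos i
  rw [h1, Real.log_prod (fun i _ => (hpos i).ne')]
  have h3 : ∀ i ∈ Finset.univ, Real.log (hA.isHermitian.eigenvalues i)
      ≤ hA.isHermitian.eigenvalues i / s - 1 + Real.log s := by
    intro i _
    have := Real.log_le_sub_one_of_pos (div_pos (hpos i) hs)
    rw [Real.log_div (hpos i).ne' hs.ne'] at this
    linarith
  refine (Finset.sum_le_sum h3).trans ?_
  rw [Finset.sum_add_distrib, Finset.sum_sub_distrib, ← Finset.sum_div, ← h2]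
  simp only [Finset.sum_const, Finset.card_univ, Fintype.card_fin, nsmul_eq_mul, mul_one]
  have : A.trace / s ≤ d := by
    rw [div_le_iff₀ hs]; linarith
  linarith

open Matrix in
lemma core {d n : ℕ} (hd : 0 < d) (x θ : ℕ → Fin d → ℝ) {e R : ℝ} (he : 0 < e) (heR : e < R)
    (hx : ∀ i, x i ⬝ᵥ x i ≤ 1) (hθ : ∀ i < n, θ i ⬝ᵥ θ i ≤ R ^ 2)
    (h1 : ∀ i < n, ∑ j ∈ Finset.range i, (x j ⬝ᵥ θ i) ^ 2 ≤ e ^ 2)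
    (h2 : ∀ i < n, e ^ 2 < (x i ⬝ᵥ θ i) ^ 2) :
    (n : ℝ) ≤ 40 * d * Real.log (1 + R / e) := by
  have hR : 0 < R := he.trans heR
  set l : ℝ := (e / R) ^ 2 with hl
  have hl0 : 0 < l := by positivity
  have hdet : ∀ t ≤ n, Real.log (vv x l t).det ≥ t * Real.log (3 / 2) + d * Real.log l := by
    intro t
    induction t with
    | zero => simp [vv]
    | succ t ih =>
      intro ht
      have hs := vv_step x hl0 t (θ t) e (by
        rw [vv_quad]
        have a1 := h1 t (by omega)
        have a2 : l * (θ t ⬝ᵥ θ t) ≤ l * R ^ 2 := by gcongr; exact hθ t (by omega)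
        have a3 : l * R ^ 2 = e ^ 2 := by rw [hl]; field_simp
        linarith) (h2 t (by omega))
      have hp := (vv_posDef x hl0 t).det_pos
      have := Real.log_le_log (by positivity) hs
      rw [Real.log_mul (by norm_num) hp.ne'] at this
      have := ih (by omega)
      push_cast
      linarith
  have hd' : (0 : ℝ) < d := by exact_mod_cast hd
  set u : ℝ := n / d with hu
  have hu0 : 0 ≤ u := by positivity
  have hnu : (n : ℝ) = d * u := by rw [hu]; field_simp
  have hup := log_det_le (vv_posDef x hl0 n) (s := l + u) (by positivity) (by
    refine (vv_trace x l hx n).trans (le_of_eq ?_)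
    rw [hnu]; ring)
  have hlow := hdet n le_rfl
  have hmain : u * Real.log (3 / 2) + Real.log l ≤ Real.log (l + u) := by
    have : (d : ℝ) * (u * Real.log (3 / 2) + Real.log l) ≤ d * Real.log (l + u) := by
      rw [hnu] at hlow
      linarith
    exact le_of_mul_le_mul_left this hd'
  set L := R / e with hL
  have hL1 : 1 < L := by rw [hL, one_lt_div he]; exact heR
  have hlL : l * L ^ 2 = 1 := by rw [hl, hL]; field_simp
  have hsplit : Real.log (l + u) ≤ Real.log l + Real.log (1 + u) + 2 * Real.log (1 + L) := by
    have : l + u ≤ l * (1 + u) * (1 + L) ^ 2 := by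
      have : l * (1 + u) * (1 + L) ^ 2 = l * (1+u) + 2 * l * (1 + u) * L + (1 + u) * (l * L^2) := by
        ring
      rw [this, hlL]
      have : 0 ≤ l * (1+u) := by positivity
      have : 0 ≤ 2 * l * (1 + u) * L := by positivity
      nlinarith
    have h := Real.log_le_log (by positivity) this
    rw [Real.log_mul (by positivity) (by positivity), Real.log_mul (by positivity) (by positivity),
      Real.log_pow (n := 2) (x := 1 + L)] at h
    push_cast at h
    linarith
  have h32 : (1 : ℝ) / 3 ≤ Real.log (3 / 2) := by
    have := Real.one_sub_inv_le_log_of_pos (show (0 : ℝ) < 3 / 2 by norm_num)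
    norm_num at this ⊢
    linarith
  have h1u : Real.log (1 + u) ≤ (1 + u) / 8 - 1 + 3 * Real.log 2 := by
    have := Real.log_le_sub_one_of_pos (show 0 < (1 + u) / 8 by positivity)
    rw [Real.log_div (by positivity) (by norm_num), show (8 : ℝ) = 2 ^ 3 by norm_num,
      Real.log_pow] at this
    push_cast at this
    linarith
  have h2L : Real.log 2 ≤ Real.log (1 + L) := Real.log_le_log (by norm_num) (by linarith)
  have hl2 : 0 < Real.log 2 := Real.log_pos (by norm_num)
  have : u ≤ 40 * Real.log (1 + L) := by nlinarith
  rw [hnu]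
  nlinarith

lemma main_bound {d n : ℕ} {X : Type} [MeasurableSpace X]
    (φ : X → EuclideanSpace ℝ (Fin d)) (R ε : ℝ) (hε : 0 < ε) (hR : 0 ≤ R)
    (hm : Measurable φ) (hφ : ∀ x, ‖φ x‖ ≤ 1) (ρ : Fin n → Measure X)
    (hρ : ∀ i, IsProbabilityMeasure (ρ i)) (e : ℝ) (hee : ε ≤ e)
    (H : ∀ i : Fin n, ∃ g ∈ {g | ∃ θ : EuclideanSpace ℝ (Fin d), ‖θ‖ ≤ R ∧
            g = fun x => ⟪φ x, θ⟫},
      Real.sqrt (∑ j : Fin n, if (j : ℕ) < (i : ℕ) then (mExp (ρ j) g) ^ 2 else 0) ≤ e ∧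
      e < |mExp (ρ i) g|) :
    (n : ℝ) ≤ 40 * d * Real.log (1 + R / ε) := by
  have he : 0 < e := hε.trans_le hee
  have hlog : 0 ≤ Real.log (1 + R / ε) := Real.log_nonneg (by
    have : 0 ≤ R / ε := by positivity
    linarith)
  rcases Nat.eq_zero_or_pos n with rfl | hn
  · simp only [Nat.cast_zero]; positivity
  set y : Fin n → EuclideanSpace ℝ (Fin d) := fun i => ∫ x, φ x ∂(ρ i) with hy
  have hint : ∀ i, Integrable φ (ρ i) := fun i =>
    Integrable.of_bound hm.aestronglyMeasurable 1 (Filter.Eventually.of_forall hφ)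
  have hmE : ∀ i θ, mExp (ρ i) (fun x => ⟪φ x, θ⟫) = ⟪y i, θ⟫ := by
    intro i θ
    rw [mExp, hy, real_inner_comm, ← integral_inner (hint i)]
    simp only [real_inner_comm]
  have hy1 : ∀ i, ‖y i‖ ≤ 1 := by
    intro i
    have := norm_integral_le_of_norm_le_const (μ := ρ i) (Filter.Eventually.of_forall hφ)
    simpa using this
  have H' : ∀ i : Fin n, ∃ θ : EuclideanSpace ℝ (Fin d), ‖θ‖ ≤ R ∧
      (∑ j : Fin n, if (j : ℕ) < (i : ℕ) then ⟪y j, θ⟫ ^ 2 else 0) ≤ e ^ 2 ∧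
      e < |⟪y i, θ⟫| := by
    intro i
    obtain ⟨g, ⟨θ, hθ, rfl⟩, ha, hb⟩ := H i
    refine ⟨θ, hθ, ?_, ?_⟩
    · rw [Real.sqrt_le_left he.le] at ha
      simpa only [hmE] using ha
    · simpa only [hmE] using hb
  choose θ hθ ha hb using H'
  have heR : e < R := by
    have h := hb ⟨0, hn⟩
    have h' := abs_real_inner_le_norm (y ⟨0, hn⟩) (θ ⟨0, hn⟩)
    have := mul_le_mul (hy1 ⟨0, hn⟩) (hθ ⟨0, hn⟩) (norm_nonneg _) zero_le_one
    linarith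
  have hd : 0 < d := by
    rcases Nat.eq_zero_or_pos d with rfl | h
    · exfalso
      have h := hb ⟨0, hn⟩
      rw [Subsingleton.elim (θ ⟨0, hn⟩) 0] at h
      simp at h
      linarith
    · exact h
  have hdot : ∀ a b : EuclideanSpace ℝ (Fin d), ⟪a, b⟫ = a.ofLp ⬝ᵥ b.ofLp := by
    intro a b
    rw [EuclideanSpace.inner_eq_star_dotProduct, dotProduct_comm]; simp
  let y' : ℕ → EuclideanSpace ℝ (Fin d) := fun j => if h : j < n then y ⟨j, h⟩ else 0
  let θ' : ℕ → EuclideanSpace ℝ (Fin d) := fun j => if h : j < n then θ ⟨j, h⟩ else 0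
  have hy' : ∀ i (h : i < n), y' i = y ⟨i, h⟩ := fun i h => dif_pos h
  have hθ' : ∀ i (h : i < n), θ' i = θ ⟨i, h⟩ := fun i h => dif_pos h
  have key := core (n := n) hd (fun j => (y' j).ofLp) (fun j => (θ' j).ofLp) he heR
    (by
      intro i
      rw [← hdot, real_inner_self_eq_norm_sq]
      by_cases h : i < n
      · rw [hy' i h]
        exact pow_le_one₀ (norm_nonneg _) (hy1 _)
      · simp [y', h])
    (by
      intro i h
      rw [← hdot, real_inner_self_eq_norm_sq, hθ' i h]
      exact pow_le_pow_left₀ (norm_nonneg _) (hθ _) 2)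
    (by
      intro i h
      have h1 := ha ⟨i, h⟩
      simp only [← hdot]
      refine le_trans (le_of_eq ?_) h1
      rw [hθ' i h]
      have : ∀ j : Fin n, y j = y' j := fun j => (hy' j j.2).symm
      simp only [this]
      rw [Fin.sum_univ_eq_sum_range (fun j => if j < i then ⟪y' j, θ ⟨i, h⟩⟫ ^ 2 else 0) n,
        ← Finset.sum_filter]
      congr 1
      ext j
      simp
      omega)
    (by
      intro i h
      simp only [← hdot]
      rw [hy' i h, hθ' i h, ← sq_abs ⟪y ⟨i, h⟩, θ ⟨i, h⟩⟫]
      exact pow_lt_pow_left₀ (hb ⟨i, h⟩) he.le two_ne_zero)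
  refine key.trans ?_
  have : R / e ≤ R / ε := by gcongr
  have h0 : 0 ≤ R / e := by positivity
  gcongr

/-- the class of `d`-dimensional linear functions with feature
norm ≤ 1 and parameter norm ≤ R' has distributional Eluder dimension
`O(d log(1 + R'/ε))` with respect to any family of probability distributions. -/
theorem statement16 :
    ∃ c : ℝ, 0 < c ∧
      ∀ (d : ℕ) (X : Type) [MeasurableSpace X]
        (φ : X → EuclideanSpace ℝ (Fin d)) (R' ε : ℝ) (Pi : Set (Measure X)),
        0 < ε → 0 ≤ R' →
        Measurable φ →
        (∀ x, ‖φ x‖ ≤ 1) →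
        (∀ μ ∈ Pi, IsProbabilityMeasure μ) →
        (dimDE {g | ∃ θ : EuclideanSpace ℝ (Fin d), ‖θ‖ ≤ R' ∧
            g = fun x => ⟪φ x, θ⟫} Pi ε : ℝ) ≤
          c * (d : ℝ) * Real.log (1 + R' / ε) := by
  refine ⟨40, by norm_num, ?_⟩
  intro d X _ φ R' ε Pi hε hR hm hφ hPi
  have hB : 0 ≤ 40 * (d : ℝ) * Real.log (1 + R' / ε) := by
    have : 0 ≤ Real.log (1 + R' / ε) := Real.log_nonneg (by
      have : 0 ≤ R' / ε := by positivity
      linarith)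
    positivity
  rw [← Nat.le_floor_iff hB]
  unfold dimDE
  refine csSup_le' ?_
  rintro n ⟨ρ, hρ, e, hee, H⟩
  exact Nat.le_floor (main_bound φ R' ε hε hR hm hφ ρ (fun i => hPi _ (hρ i)) e hee H)
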